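/- Let V be a finite-dimensional ℚ-vector space with dim V ≥ 3. The group GL(V) acts linearly on V ⊗ Λ²(P²V) by functoriality (g acting as g ⊗ Λ²(P²g)), and the subspace R(V) = ker m is invariant under this action. Then R(V) is nonzero and is an irreducible GL(V)-representation: the only GL(V)-invariant subspaces of R(V) are 0 and R(V) itself. -/

import Mathlib

/-!
Common constructions: for a `ℚ`-vector space `V`, the symmetric powers
`P²V, P³V, P⁴V, P⁵V` (as `SqM V`, `CubM V`, `QuarM V`, `QuinM V`), built as iterated
quotients of tensor products, with the multiplication maps between them; the exterior
square `Λ²W` (as `AltM W`) with the wedge map; and the 5-linear map `⋆` (as `star5`).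
-/

open TensorProduct

noncomputable section

variable (V W : Type) [AddCommGroup V] [Module ℚ V] [AddCommGroup W] [Module ℚ W]

/-- The relations defining the symmetric square `P²V` as a quotient of `V ⊗ V`. -/
def sqRel : Submodule ℚ (V ⊗[ℚ] V) :=
  Submodule.span ℚ {z | ∃ x y : V, z = x ⊗ₜ[ℚ] y - y ⊗ₜ[ℚ] x}

/-- The symmetric square `P²V`. -/
abbrev SqM : Type := (V ⊗[ℚ] V) ⧸ sqRel V

/-- The product `V × V → P²V`, `(x, y) ↦ xy`. -/
def sqm : V →ₗ[ℚ] V →ₗ[ℚ] SqM V :=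
  (TensorProduct.mk ℚ V V).compr₂ (sqRel V).mkQ

/-- The relations presenting the symmetric cube `P³V` as a quotient of `V ⊗ P²V`. -/
def cubRel : Submodule ℚ (V ⊗[ℚ] SqM V) :=
  Submodule.span ℚ {z | ∃ x y w : V, z = x ⊗ₜ[ℚ] sqm V y w - y ⊗ₜ[ℚ] sqm V x w}

/-- The symmetric cube `P³V`. -/
abbrev CubM : Type := (V ⊗[ℚ] SqM V) ⧸ cubRel V

/-- The product `V × P²V → P³V`. -/
def mulC : V →ₗ[ℚ] SqM V →ₗ[ℚ] CubM V :=
  (TensorProduct.mk ℚ V (SqM V)).compr₂ (cubRel V).mkQ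

/-- The relations presenting `P⁴V` as a quotient of `V ⊗ P³V`. -/
def quarRel : Submodule ℚ (V ⊗[ℚ] CubM V) :=
  Submodule.span ℚ {z | ∃ (x y : V) (u : SqM V), z = x ⊗ₜ[ℚ] mulC V y u - y ⊗ₜ[ℚ] mulC V x u}

/-- The symmetric fourth power `P⁴V`. -/
abbrev QuarM : Type := (V ⊗[ℚ] CubM V) ⧸ quarRel V

/-- The product `V × P³V → P⁴V`. -/
def mulQ : V →ₗ[ℚ] CubM V →ₗ[ℚ] QuarM V :=
  (TensorProduct.mk ℚ V (CubM V)).compr₂ (quarRel V).mkQ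

/-- The relations presenting `P⁵V` as a quotient of `V ⊗ P⁴V`. -/
def quinRel : Submodule ℚ (V ⊗[ℚ] QuarM V) :=
  Submodule.span ℚ {z | ∃ (x y : V) (c : CubM V), z = x ⊗ₜ[ℚ] mulQ V y c - y ⊗ₜ[ℚ] mulQ V x c}

/-- The symmetric fifth power `P⁵V`. -/
abbrev QuinM : Type := (V ⊗[ℚ] QuarM V) ⧸ quinRel V

/-- The product `V × P⁴V → P⁵V`. -/
def mulQn : V →ₗ[ℚ] QuarM V →ₗ[ℚ] QuinM V :=
  (TensorProduct.mk ℚ V (QuarM V)).compr₂ (quinRel V).mkQ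

/-- The relations defining the exterior square `Λ²W` as a quotient of `W ⊗ W`. -/
def altRel2 : Submodule ℚ (W ⊗[ℚ] W) :=
  Submodule.span ℚ {z | ∃ x : W, z = x ⊗ₜ[ℚ] x}

/-- The exterior square `Λ²W`. -/
abbrev AltM : Type := (W ⊗[ℚ] W) ⧸ altRel2 W

/-- The wedge product `W × W → Λ²W`. -/
def wdg : W →ₗ[ℚ] W →ₗ[ℚ] AltM W :=
  (TensorProduct.mk ℚ W W).compr₂ (altRel2 W).mkQ

/-- The element `⋆(x₁,…,x₅) = Σ_{i ∈ ℤ/5} xᵢ ⊗ (x_{i+1}x_{i+2} ∧ x_{i+3}x_{i+4})`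
of `V ⊗ Λ²(P²V)`. -/
def star5 (x₁ x₂ x₃ x₄ x₅ : V) : V ⊗[ℚ] AltM (SqM V) :=
    x₁ ⊗ₜ[ℚ] wdg (SqM V) (sqm V x₂ x₃) (sqm V x₄ x₅)
  + x₂ ⊗ₜ[ℚ] wdg (SqM V) (sqm V x₃ x₄) (sqm V x₅ x₁)
  + x₃ ⊗ₜ[ℚ] wdg (SqM V) (sqm V x₄ x₅) (sqm V x₁ x₂)
  + x₄ ⊗ₜ[ℚ] wdg (SqM V) (sqm V x₅ x₁) (sqm V x₂ x₃)
  + x₅ ⊗ₜ[ℚ] wdg (SqM V) (sqm V x₁ x₂) (sqm V x₃ x₄)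

/-!
The kernel `R(V)` is spanned by the elements `∑ x ⊗ (py ∧ qz + qy ∧ pz)`, cyclic in `x, y, z`: an
explicit map back to `V ⊗ Λ²(P²V)` inverts `10⁻¹ m` modulo these elements. By polarization already
the highest weight vectors among them, those with `p = q = x`, span.

Let `U ⊆ R(V)` be `GL(V)`-stable. Since `f + t` is invertible for all but finitely many `t`, `U` is
stable under every endomorphism `f` of finite rank. Degenerating such an `f` to rank one extracts
from `u ∈ U` any highest weight vector, with coefficient the pairing of `u` with another arbitrary
highest weight vector. So either one of these pairings is nonzero and `U = R(V)`, or `U` is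
orthogonal to `R(V) ⊇ U`, and `U = 0` because the form is positive definite.
-/

section AlternatingMap

theorem alternatingMap_map_sum_smul {R M N ι : Type*} [CommRing R] [AddCommGroup M] [Module R M]
    [AddCommGroup N] [Module R N] [Fintype ι] [DecidableEq ι] (f : M [⋀^ι]→ₗ[R] N)
    (A : Matrix ι ι R) (v : ι → M) : f (fun i => ∑ j, A i j • v j) = A.det • f v := by
  let toM : (ι → R) →ₗ[R] M := Fintype.linearCombination R v
  let rhs : (ι → R) [⋀^ι]→ₗ[R] N :=
    (LinearMap.toSpanSingleton R N (f v)).compAlternatingMap Matrix.detRowAlternating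
  suffices h : f.compLinearMap toM = rhs from DFunLike.congr_fun h A
  refine Module.Basis.ext_alternating (Pi.basisFun R ι) fun σ hσ => ?_
  let τ : Equiv.Perm ι := Equiv.ofBijective σ (Finite.injective_iff_bijective.1 hσ)
  have h (g : (ι → R) [⋀^ι]→ₗ[R] N) : g (fun i => Pi.basisFun R ι (σ i)) =
      Equiv.Perm.sign τ • g (Pi.basisFun R ι) := g.map_perm _ τ
  rw [h, h]
  congr 1
  have hdet : Matrix.detRowAlternating (Pi.basisFun R ι) = 1 := by
    rw [← Pi.basisFun_det, Module.Basis.det_self]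
  simp [rhs, toM, hdet]

end AlternatingMap

section FiniteRange

open Module

variable {K M N : Type*} [Field K] [AddCommGroup M] [Module K M] [AddCommGroup N] [Module K N]

theorem isUnit_comp_add_algebraMap_swap {A : N →ₗ[K] M} {B : M →ₗ[K] N} {t : K} (ht : t ≠ 0)
    (h : IsUnit (B ∘ₗ A + algebraMap K (End K N) t)) :
    IsUnit (A ∘ₗ B + algebraMap K (End K M) t) := by
  rw [Module.End.isUnit_iff] at h ⊢
  refine ⟨(injective_iff_map_eq_zero _).2 fun v hv => ?_, fun w => ?_⟩
  · replace hv : A (B v) + t • v = 0 := hv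
    have hBv : B v = 0 := (injective_iff_map_eq_zero _).1 h.1 _ <| by
      simpa using congrArg B hv
    simpa [hBv, ht] using hv
  · obtain ⟨y, hy⟩ := h.2 (B w)
    replace hy : B (A y) + t • y = B w := hy
    refine ⟨t⁻¹ • (w - A y), ?_⟩
    have hAy : A (B w) - A (B (A y)) = t • A y := by rw [← hy]; simp
    simp [hAy, ht]

theorem finite_setOf_not_isUnit_add_algebraMap (f : End K M)
    [FiniteDimensional K (LinearMap.range f)] :
    {t : K | ¬ IsUnit (f + algebraMap K (End K M) t)}.Finite := by
  -- `f + t` is invertible as soon as its restriction to the range of `f` is.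
  let g : End K f.range := f.rangeRestrict ∘ₗ f.range.subtype
  refine ((Module.End.finite_spectrum (-g)).insert 0).subset fun t ht => ?_
  by_contra hn
  simp only [Set.mem_insert_iff, not_or, spectrum.notMem_iff] at hn
  refine ht (isUnit_comp_add_algebraMap_swap (A := f.range.subtype) (B := f.rangeRestrict) hn.1 ?_)
  rw [add_comm, ← sub_neg_eq_add]
  exact hn.2

end FiniteRange

section DualBasis

variable {K M N ι κ : Type*} [CommRing K] [AddCommGroup M] [Module K M]
  [AddCommGroup N] [Module K N] [DecidableEq ι] [DecidableEq κ]

theorem eq_zero_of_toDual_self_eq_zero [LinearOrder K] [IsStrictOrderedRing K]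
    (b : Module.Basis ι K M) {x : M} (hx : b.toDual x x = 0) : x = 0 := by
  have h : b.toDual x x = ∑ i ∈ (b.repr x).support, b.repr x i * b.repr x i := by
    conv_lhs => enter [2]; rw [← b.linearCombination_repr x]
    simp [Finsupp.linearCombination_apply, Finsupp.sum, Module.Basis.toDual_apply_left]
  rw [h, Finset.sum_eq_zero_iff_of_nonneg fun i _ => mul_self_nonneg _] at hx
  exact b.ext_elem fun i => by simpa using hx i

theorem toDual_tensorProduct (b : Module.Basis ι K M) (c : Module.Basis κ K N) :
    (b.tensorProduct c).toDual = LinearMap.BilinForm.tmul (A := K) b.toDual c.toDual := by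
  refine (b.tensorProduct c).ext fun i => (b.tensorProduct c).ext fun j => ?_
  rw [Module.Basis.toDual_apply]
  simp [Module.Basis.tensorProduct_apply', Module.Basis.toDual_apply, Prod.ext_iff, ite_and]

end DualBasis

section PolynomialCurves

variable {R M N P : Type*} [CommRing R] [AddCommGroup M] [Module R M] [AddCommGroup N] [Module R N]
  [AddCommGroup P] [Module R P]

variable (R M) in
/-- The polynomial curves in `M`, i.e. the maps `t ↦ ∑ tⁿ wₙ`, as functions of the parameter. -/
def polynomialCurves : Submodule R (R → M) :=
  .span R {φ | ∃ (n : ℕ) (w : M), φ = fun t => t ^ n • w}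

theorem add_smul_mem_polynomialCurves (v w : M) :
    (fun t : R => v + t • w) ∈ polynomialCurves R M :=
  add_mem (Submodule.subset_span ⟨0, v, by simp⟩) (Submodule.subset_span ⟨1, w, by simp⟩)

theorem bilinear_mem_polynomialCurves (B : M →ₗ[R] N →ₗ[R] P) {φ : R → M} {ψ : R → N}
    (hφ : φ ∈ polynomialCurves R M) (hψ : ψ ∈ polynomialCurves R N) :
    (fun t => B (φ t) (ψ t)) ∈ polynomialCurves R P := by
  induction hφ, hψ using Submodule.span_induction₂ with
  | mem_mem φ ψ hφ hψ =>
    obtain ⟨n, v, rfl⟩ := hφ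
    obtain ⟨k, w, rfl⟩ := hψ
    exact Submodule.subset_span
      ⟨n + k, B v w, funext fun t => by simp [pow_add, smul_smul, mul_comm]⟩
  | zero_left | zero_right =>
    simp only [Pi.zero_apply, map_zero, LinearMap.zero_apply]
    exact zero_mem _
  | add_left _ _ _ _ _ _ h₁ h₂ | add_right _ _ _ _ _ _ h₁ h₂ =>
    simp only [Pi.add_apply, map_add, LinearMap.add_apply]
    exact add_mem h₁ h₂
  | smul_left c _ _ _ _ h | smul_right c _ _ _ _ h =>
    simp only [Pi.smul_apply, map_smul, LinearMap.smul_apply]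
    exact Submodule.smul_mem _ c h

theorem exists_polynomial_eval_eq {φ : R → M} (hφ : φ ∈ polynomialCurves R M)
    (ℓ : Module.Dual R M) : ∃ p : Polynomial R, ∀ t, p.eval t = ℓ (φ t) := by
  induction hφ using Submodule.span_induction with
  | mem φ hφ =>
    obtain ⟨n, w, rfl⟩ := hφ
    exact ⟨.monomial n (ℓ w), by simp [mul_comm]⟩
  | zero => exact ⟨0, by simp⟩
  | add φ ψ _ _ h₁ h₂ =>
    obtain ⟨p, hp⟩ := h₁
    obtain ⟨q, hq⟩ := h₂
    exact ⟨p + q, by simp [hp, hq]⟩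
  | smul c φ _ h =>
    obtain ⟨p, hp⟩ := h
    exact ⟨c • p, by simp [hp]⟩

theorem mem_of_infinite_setOf_mem {K M : Type*} [Field K] [AddCommGroup M] [Module K M]
    {φ : K → M} (hφ : φ ∈ polynomialCurves K M) {U : Submodule K M}
    (hU : {t | φ t ∈ U}.Infinite) (t : K) : φ t ∈ U := by
  by_contra ht
  obtain ⟨ℓ, hℓ, hUℓ⟩ := U.exists_le_ker_of_notMem ht
  obtain ⟨p, hp⟩ := exists_polynomial_eval_eq hφ ℓ
  have hp0 : p = 0 := p.eq_zero_of_infinite_isRoot <| hU.mono fun s hs => (hp s).trans (hUℓ hs)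
  exact hℓ <| by simp [← hp, hp0]

end PolynomialCurves

local notation:75 x:75 "⬝" y:76 => sqm _ x y
local notation:72 u:73 "⋏" v:73 => wdg _ u v

section Presentations

variable {V W} {M : Type*} [AddCommGroup M] [Module ℚ M]

theorem sqm_comm (x y : V) : x⬝y = y⬝x :=
  (Submodule.Quotient.eq _).2 (Submodule.subset_span ⟨x, y, rfl⟩)

theorem mulC_sqm_comm (x y z : V) : mulC V x (y⬝z) = mulC V y (x⬝z) :=
  (Submodule.Quotient.eq _).2 (Submodule.subset_span ⟨x, y, z, rfl⟩)

theorem wdg_self (u : W) : u⋏u = 0 :=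
  (Submodule.Quotient.mk_eq_zero _).2 (Submodule.subset_span ⟨u, rfl⟩)

theorem wdg_antisymm (u v : W) : u⋏v = -(v⋏u) := by
  have h := wdg_self (u + v)
  simp only [map_add, LinearMap.add_apply, wdg_self, zero_add, add_zero] at h
  exact eq_neg_of_add_eq_zero_right h

/-- The linear map out of `P²V` induced by a symmetric bilinear map. -/
def sqLift (B : V →ₗ[ℚ] V →ₗ[ℚ] M) (hB : ∀ x y, B x y = B y x) : SqM V →ₗ[ℚ] M :=
  (sqRel V).liftQ (lift B) <| by
    rw [sqRel, Submodule.span_le]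
    rintro _ ⟨x, y, rfl⟩
    simp [hB x y]

@[simp]
theorem sqLift_sqm (B : V →ₗ[ℚ] V →ₗ[ℚ] M) (hB : ∀ x y, B x y = B y x) (x y : V) :
    sqLift B hB (x⬝y) = B x y := by
  simp [sqLift, sqm]

/-- The linear map out of `P³V` induced by a bilinear map on `V × P²V` whose associated trilinear
map on `V` is symmetric. -/
def cubLift (B : V →ₗ[ℚ] SqM V →ₗ[ℚ] M) (hB : ∀ x y z, B x (y⬝z) = B y (x⬝z)) :
    CubM V →ₗ[ℚ] M :=
  (cubRel V).liftQ (lift B) <| by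
    rw [cubRel, Submodule.span_le]
    rintro _ ⟨x, y, z, rfl⟩
    simp [hB x y z]

@[simp]
theorem cubLift_mulC (B : V →ₗ[ℚ] SqM V →ₗ[ℚ] M)
    (hB : ∀ x y z, B x (y⬝z) = B y (x⬝z)) (x : V) (s : SqM V) :
    cubLift B hB (mulC V x s) = B x s := by
  simp [cubLift, mulC]

/-- The linear map out of `Λ²W` induced by an alternating bilinear map. -/
def altLift (B : W →ₗ[ℚ] W →ₗ[ℚ] M) (hB : ∀ u, B u u = 0) : AltM W →ₗ[ℚ] M :=
  (altRel2 W).liftQ (lift B) <| by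
    rw [altRel2, Submodule.span_le]
    rintro _ ⟨u, rfl⟩
    simp [hB u]

@[simp]
theorem altLift_wdg (B : W →ₗ[ℚ] W →ₗ[ℚ] M) (hB : ∀ u, B u u = 0) (u v : W) :
    altLift B hB (u⋏v) = B u v := by
  simp [altLift, wdg]

theorem sqM_hom_ext {f g : SqM V →ₗ[ℚ] M} (h : ∀ x y, f (x⬝y) = g (x⬝y)) : f = g :=
  Submodule.linearMap_qext _ (TensorProduct.ext' h)

theorem altM_hom_ext {f g : AltM W →ₗ[ℚ] M} (h : ∀ u v, f (u⋏v) = g (u⋏v)) : f = g :=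
  Submodule.linearMap_qext _ (TensorProduct.ext' h)

variable (V) in
/-- The polarization `xy ↦ x ⊗ y + y ⊗ x` embedding `P²V` into `V ⊗ V`, left unnormalized. -/
def sqPolar : SqM V →ₗ[ℚ] V ⊗[ℚ] V :=
  sqLift (mk ℚ V V + (mk ℚ V V).flip) fun x y => by simp [add_comm]

@[simp]
theorem sqPolar_sqm (x y : V) : sqPolar V (x⬝y) = x ⊗ₜ y + y ⊗ₜ x :=
  sqLift_sqm _ _ x y

variable (W) in
/-- The antisymmetrization `u ∧ v ↦ u ⊗ v - v ⊗ u` embedding `Λ²W` into `W ⊗ W`, left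
unnormalized. -/
def altPolar : AltM W →ₗ[ℚ] W ⊗[ℚ] W :=
  altLift (mk ℚ W W - (mk ℚ W W).flip) fun u => by simp

@[simp]
theorem altPolar_wdg (u v : W) : altPolar W (u⋏v) = u ⊗ₜ v - v ⊗ₜ u := by
  simp [altPolar]

theorem sqPolar_injective : Function.Injective (sqPolar V) := by
  have h : (sqRel V).mkQ ∘ₗ sqPolar V = (2 : ℚ) • LinearMap.id := sqM_hom_ext fun x y => by
    change (sqRel V).mkQ (sqPolar V (x⬝y)) = (2 : ℚ) • (x⬝y)
    rw [sqPolar_sqm, map_add, two_smul]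
    exact congrArg (x⬝y + ·) (sqm_comm y x)
  exact .of_comp (f := (sqRel V).mkQ) <| by
    rw [← LinearMap.coe_comp, h]
    exact smul_right_injective _ (two_ne_zero (α := ℚ))

theorem altPolar_injective : Function.Injective (altPolar W) := by
  have h : (altRel2 W).mkQ ∘ₗ altPolar W = (2 : ℚ) • LinearMap.id := altM_hom_ext fun u v => by
    change (altRel2 W).mkQ (altPolar W (u⋏v)) = (2 : ℚ) • (u⋏v)
    rw [altPolar_wdg, map_sub, two_smul]
    exact (congrArg (u⋏v - ·) (wdg_antisymm v u)).trans (sub_neg_eq_add _ _)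
  exact .of_comp (f := (altRel2 W).mkQ) <| by
    rw [← LinearMap.coe_comp, h]
    exact smul_right_injective _ (two_ne_zero (α := ℚ))

/-- The functorial map `P²f`. -/
def sqMap (f : V →ₗ[ℚ] W) : SqM V →ₗ[ℚ] SqM W :=
  sqLift ((sqm W).compl₁₂ f f) fun x y => by simpa using sqm_comm _ _

/-- The functorial map `Λ²f`. -/
def altMap (f : V →ₗ[ℚ] W) : AltM V →ₗ[ℚ] AltM W :=
  altLift ((wdg W).compl₁₂ f f) fun u => by simpa using wdg_self _

end Presentations

section Ambient

variable {V W} {M : Type*} [AddCommGroup M] [Module ℚ M]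

variable (V) in
/-- The space `V ⊗ Λ²(P²V)` containing `R(V)`. -/
abbrev RAmbient : Type := V ⊗[ℚ] AltM (SqM V)

theorem rAmbient_hom_ext {f g : RAmbient V →ₗ[ℚ] M}
    (h : ∀ q x y z w, f (q ⊗ₜ (x⬝y⋏z⬝w)) = g (q ⊗ₜ (x⬝y⋏z⬝w))) : f = g := by
  have ext₂ {B B' : SqM V →ₗ[ℚ] SqM V →ₗ[ℚ] M}
      (h : ∀ x y z w, B (x⬝y) (z⬝w) = B' (x⬝y) (z⬝w)) : B = B' :=
    sqM_hom_ext fun x y => sqM_hom_ext fun z w => h x y z w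
  refine TensorProduct.ext (LinearMap.ext fun q => altM_hom_ext fun u v => ?_)
  exact LinearMap.congr_fun₂ (ext₂ (B := (wdg (SqM V)).compr₂ (f ∘ₗ mk ℚ _ _ q))
    (B' := (wdg (SqM V)).compr₂ (g ∘ₗ mk ℚ _ _ q)) fun x y z w => h q x y z w) u v

/-- The functorial map `f ⊗ Λ²(P²f)`; for `f` invertible it is the action of `GL(V)`. -/
def RAmbient.map (f : V →ₗ[ℚ] W) : RAmbient V →ₗ[ℚ] RAmbient W :=
  TensorProduct.map f (altMap (sqMap f))

@[simp]
theorem RAmbient.map_tmul (f : V →ₗ[ℚ] W) (q x y z w : V) :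
    RAmbient.map f (q ⊗ₜ (x⬝y⋏z⬝w)) = f q ⊗ₜ (f x⬝f y⋏f z⬝f w) := by
  simp [RAmbient.map, sqMap, altMap]

variable (V) in
/-- The embedding of `V ⊗ Λ²(P²V)` into `V^{⊗5}` obtained by polarizing every factor. -/
def RAmbient.polar : RAmbient V →ₗ[ℚ] V ⊗[ℚ] ((V ⊗[ℚ] V) ⊗[ℚ] (V ⊗[ℚ] V)) :=
  (TensorProduct.map (sqPolar V) (sqPolar V) ∘ₗ altPolar (SqM V)).lTensor V

theorem RAmbient.polar_injective : Function.Injective (RAmbient.polar V) :=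
  Module.Flat.lTensor_preserves_injective_linearMap _ <|
    (map_injective_of_flat_flat _ _ sqPolar_injective sqPolar_injective).comp altPolar_injective

end Ambient

section Kernel

variable {V W}

-- Rewriting `⋏` through an arbitrary `ω` lets `abel` and `module` see its antisymmetry.
theorem exists_wdg_eq_sub (W : Type) [AddCommGroup W] [Module ℚ W] :
    ∃ ω : W →ₗ[ℚ] W →ₗ[ℚ] AltM W, ∀ u v, u⋏v = ω u v - ω v u := by
  refine ⟨(1 / 2 : ℚ) • wdg W, fun u v => ?_⟩
  rw [LinearMap.smul_apply, LinearMap.smul_apply, LinearMap.smul_apply, LinearMap.smul_apply,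
    wdg_antisymm v u]
  module

/-- The element `∑ x ⊗ (py ∧ qz + qy ∧ pz)` of `ker m`, the sum being over cyclic permutations of
`x, y, z`, as an alternating function of `x, y, z`. For `p = q = x` it is a highest weight
vector. -/
def koszulGen (p q : V) : V [⋀^Fin 3]→ₗ[ℚ] RAmbient V where
  toFun v := v 0 ⊗ₜ (p⬝v 1⋏q⬝v 2) + v 0 ⊗ₜ (q⬝v 1⋏p⬝v 2)
    + v 1 ⊗ₜ (p⬝v 2⋏q⬝v 0) + v 1 ⊗ₜ (q⬝v 2⋏p⬝v 0)
    + v 2 ⊗ₜ (p⬝v 0⋏q⬝v 1) + v 2 ⊗ₜ (q⬝v 0⋏p⬝v 1)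
  map_update_add' v i x y := by
    obtain rfl := Subsingleton.elim ‹DecidableEq (Fin 3)› (instDecidableEqFin 3)
    fin_cases i <;> simp [tmul_add, add_tmul] <;> abel
  map_update_smul' v i c x := by
    obtain rfl := Subsingleton.elim ‹DecidableEq (Fin 3)› (instDecidableEqFin 3)
    fin_cases i <;> simp [smul_tmul']
  map_eq_zero_of_eq' v i j hij hne := by
    obtain ⟨ω, hω⟩ := exists_wdg_eq_sub (SqM V)
    fin_cases i <;> fin_cases j <;> simp_all [tmul_sub] <;> abel

theorem koszulGen_apply (p q x y z : V) :
    koszulGen p q ![x, y, z] = x ⊗ₜ (p⬝y⋏q⬝z) + x ⊗ₜ (q⬝y⋏p⬝z)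
    + y ⊗ₜ (p⬝z⋏q⬝x) + y ⊗ₜ (q⬝z⋏p⬝x)
    + z ⊗ₜ (p⬝x⋏q⬝y) + z ⊗ₜ (q⬝x⋏p⬝y) := rfl

theorem koszulGen_polarization (a x y z : V) :
    (2 : ℚ) • (koszulGen a a ![x, y, z] + (2 : ℚ) • koszulGen a x ![a, y, z]) =
      koszulGen (x + a) (x + a) ![x + a, y, z] + koszulGen (x - a) (x - a) ![x - a, y, z]
        - (2 : ℚ) • koszulGen x x ![x, y, z] := by
  simp only [koszulGen_apply, map_add, map_sub, LinearMap.add_apply, LinearMap.sub_apply, add_tmul,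
    sub_tmul, tmul_add, tmul_sub]
  module

variable (V) in
/-- The polarization `P³V → V ⊗ P²V`, `xyz ↦ x ⊗ yz + y ⊗ xz + z ⊗ xy`. -/
def comul : CubM V →ₗ[ℚ] V ⊗[ℚ] SqM V :=
  cubLift (mk ℚ V (SqM V) + ((LinearMap.lTensorHom V).comp (sqm V)).compl₂ (sqPolar V))
    fun x y z => by simp [sqm_comm y x, add_left_comm]

@[simp]
theorem comul_mulC (x y z : V) :
    comul V (mulC V x (y⬝z)) = x ⊗ₜ (y⬝z) + y ⊗ₜ (x⬝z) + z ⊗ₜ (x⬝y) :=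
  (cubLift_mulC _ _ _ _).trans <| by simp [add_assoc]

variable (V) in
/-- The bilinear map `(x ⊗ u, v) ↦ x ⊗ (u ∧ v)`. -/
def wedgeSq : V ⊗[ℚ] SqM V →ₗ[ℚ] SqM V →ₗ[ℚ] RAmbient V :=
  lift ((LinearMap.llcomp ℚ (SqM V) (AltM (SqM V)) (RAmbient V)).compl₁₂
    (mk ℚ V (AltM (SqM V))) (wdg (SqM V)))

variable (V) in
/-- The bilinear map `(x ⊗ u, vw) ↦ v ⊗ (u ∧ xw) + w ⊗ (u ∧ xv)`. -/
def wedgeShift : V ⊗[ℚ] SqM V →ₗ[ℚ] SqM V →ₗ[ℚ] RAmbient V :=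
  (lift (((LinearMap.llcomp ℚ V (SqM V) (AltM (SqM V))).compl₁₂ (wdg (SqM V)) (sqm V)).flip.compr₂
    (LinearMap.lTensorHom V))).compl₂ (sqPolar V)

variable (V) in
/-- A map which splits `m` modulo `koszulSpan V`, up to the factor `10`: see
`homotopy_identity`. -/
def homotopy : CubM V ⊗[ℚ] SqM V →ₗ[ℚ] RAmbient V :=
  lift (((3 : ℚ) • wedgeSq V - wedgeShift V) ∘ₗ comul V)

theorem homotopy_tmul (x y z v w : V) :
    homotopy V (mulC V x (y⬝z) ⊗ₜ (v⬝w)) =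
      (3 : ℚ) • (x ⊗ₜ (y⬝z⋏v⬝w) + y ⊗ₜ (x⬝z⋏v⬝w) + z ⊗ₜ (x⬝y⋏v⬝w))
      - (v ⊗ₜ (y⬝z⋏x⬝w) + w ⊗ₜ (y⬝z⋏x⬝v))
      - (v ⊗ₜ (x⬝z⋏y⬝w) + w ⊗ₜ (x⬝z⋏y⬝v))
      - (v ⊗ₜ (x⬝y⋏z⬝w) + w ⊗ₜ (x⬝y⋏z⬝v)) := by
  simp [homotopy, wedgeSq, wedgeShift, sub_sub, add_assoc]

theorem homotopy_identity {m : RAmbient V →ₗ[ℚ] CubM V ⊗[ℚ] SqM V}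
    (hm : ∀ q u v, m (q ⊗ₜ (u⋏v)) = mulC V q u ⊗ₜ v - mulC V q v ⊗ₜ u) (q x y z w : V) :
    (10 : ℚ) • q ⊗ₜ (x⬝y⋏z⬝w) = homotopy V (m (q ⊗ₜ (x⬝y⋏z⬝w)))
      + (koszulGen x z ![q, y, w] + koszulGen x w ![q, y, z] + koszulGen y z ![q, x, w]
        + koszulGen y w ![q, x, z]) := by
  obtain ⟨ω, hω⟩ := exists_wdg_eq_sub (SqM V)
  rw [hm, map_sub, homotopy_tmul, homotopy_tmul]
  simp only [koszulGen_apply, hω, sqm_comm, tmul_sub]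
  module

theorem five_smul_koszulGen (a x y z : V) :
    (5 : ℚ) • koszulGen a a ![x, y, z] =
      (koszulGen a a ![x, y, z] + (2 : ℚ) • koszulGen a x ![a, y, z])
      + (koszulGen a a ![y, z, x] + (2 : ℚ) • koszulGen a y ![a, z, x])
      + (koszulGen a a ![z, x, y] + (2 : ℚ) • koszulGen a z ![a, x, y]) := by
  obtain ⟨ω, hω⟩ := exists_wdg_eq_sub (SqM V)
  simp only [koszulGen_apply, hω, sqm_comm, tmul_sub]
  module

theorem two_smul_koszulGen (p q x y z : V) :
    (2 : ℚ) • koszulGen p q ![x, y, z] = koszulGen (p + q) (p + q) ![x, y, z]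
      - koszulGen p p ![x, y, z] - koszulGen q q ![x, y, z] := by
  simp only [koszulGen_apply, map_add, LinearMap.add_apply, tmul_add]
  module

variable (V) in
/-- The span of all `koszulGen p q ![x, y, z]`, a realization of the Weyl module `S(3,1,1)`. -/
def koszulSpan : Submodule ℚ (RAmbient V) :=
  .span ℚ {t | ∃ p q x y z, t = koszulGen p q ![x, y, z]}

theorem koszulGen_mem_koszulSpan (p q x y z : V) : koszulGen p q ![x, y, z] ∈ koszulSpan V :=
  Submodule.subset_span ⟨p, q, x, y, z, rfl⟩

theorem ker_eq_koszulSpan {m : RAmbient V →ₗ[ℚ] CubM V ⊗[ℚ] SqM V}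
    (hm : ∀ q u v, m (q ⊗ₜ (u⋏v)) = mulC V q u ⊗ₜ v - mulC V q v ⊗ₜ u) :
    LinearMap.ker m = koszulSpan V := by
  refine le_antisymm (fun t ht => ?_) (Submodule.span_le.2 ?_)
  · have h : (koszulSpan V).mkQ ∘ₗ ((10 : ℚ) • LinearMap.id) =
        (koszulSpan V).mkQ ∘ₗ homotopy V ∘ₗ m := rAmbient_hom_ext fun q x y z w => by
      refine (Submodule.Quotient.eq _).2 ?_
      simp only [LinearMap.smul_apply, LinearMap.id_apply, LinearMap.comp_apply,
        homotopy_identity hm, add_sub_cancel_left]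
      have mem := koszulGen_mem_koszulSpan (V := V)
      exact add_mem (add_mem (add_mem (mem _ _ _ _ _) (mem _ _ _ _ _)) (mem _ _ _ _ _))
        (mem _ _ _ _ _)
    have h10 : (10 : ℚ) • t ∈ koszulSpan V := by
      rw [← Submodule.Quotient.mk_eq_zero]
      simpa [LinearMap.mem_ker.1 ht] using LinearMap.congr_fun h t
    exact (Submodule.smul_mem_iff _ (by norm_num)).1 h10
  · rintro _ ⟨p, q, x, y, z, rfl⟩
    simp only [SetLike.mem_coe, LinearMap.mem_ker, koszulGen_apply, map_add, hm, sqm_comm,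
      mulC_sqm_comm]
    abel

theorem RAmbient.map_koszulGen (f : V →ₗ[ℚ] W) (p q x y z : V) :
    RAmbient.map f (koszulGen p q ![x, y, z]) = koszulGen (f p) (f q) ![f x, f y, f z] := by
  simp only [koszulGen_apply, map_add, RAmbient.map_tmul]

theorem RAmbient.map_koszulSpan_le (f : V →ₗ[ℚ] W) :
    (koszulSpan V).map (RAmbient.map f) ≤ koszulSpan W := by
  rw [koszulSpan, Submodule.map_span_le]
  rintro _ ⟨p, q, x, y, z, rfl⟩
  exact RAmbient.map_koszulGen f p q x y z ▸ koszulGen_mem_koszulSpan _ _ _ _ _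

theorem koszulSpan_le {U : Submodule ℚ (RAmbient V)}
    (hU : ∀ a b c, koszulGen a a ![a, b, c] ∈ U) : koszulSpan V ≤ U := by
  have polar_mem (a x y z : V) :
      koszulGen a a ![x, y, z] + (2 : ℚ) • koszulGen a x ![a, y, z] ∈ U := by
    rw [← U.smul_mem_iff (two_ne_zero (α := ℚ)), koszulGen_polarization]
    exact sub_mem (add_mem (hU ..) (hU ..)) (U.smul_mem _ (hU ..))
  have diag_mem (a x y z : V) : koszulGen a a ![x, y, z] ∈ U := by
    rw [← U.smul_mem_iff (by norm_num : (5 : ℚ) ≠ 0), five_smul_koszulGen]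
    exact add_mem (add_mem (polar_mem ..) (polar_mem ..)) (polar_mem ..)
  refine Submodule.span_le.2 ?_
  rintro _ ⟨p, q, x, y, z, rfl⟩
  rw [SetLike.mem_coe, ← U.smul_mem_iff (two_ne_zero (α := ℚ)), two_smul_koszulGen]
  exact sub_mem (sub_mem (diag_mem ..) (diag_mem ..)) (diag_mem ..)

end Kernel

section Pairing

open LinearMap (BilinForm)

variable {V}

/-- The bilinear form on `V ⊗ Λ²(P²V)` induced by `B^{⊗5}` through `RAmbient.polar`. -/
def RAmbient.pairing (B : BilinForm ℚ V) : BilinForm ℚ (RAmbient V) :=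
  letI B₂ : BilinForm ℚ (V ⊗[ℚ] V) := BilinForm.tmul (A := ℚ) B B
  LinearMap.compl₁₂ (BilinForm.tmul (A := ℚ) B (BilinForm.tmul (A := ℚ) B₂ B₂)) (polar V) (polar V)

theorem koszulGen_self (a b c : V) : koszulGen a a ![a, b, c] =
    (2 : ℚ) • (a ⊗ₜ (a⬝b⋏a⬝c) + b ⊗ₜ (a⬝c⋏a⬝a) + c ⊗ₜ (a⬝a⋏a⬝b)) := by
  rw [koszulGen_apply]
  module

theorem RAmbient.pairing_tmul (B : BilinForm ℚ V) (q x y z w q' x' y' z' w' : V) :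
    pairing B (q ⊗ₜ (x⬝y⋏z⬝w)) (q' ⊗ₜ (x'⬝y'⋏z'⬝w')) =
      8 * (B q q' * ((B x x' * B y y' + B x y' * B y x') * (B z z' * B w w' + B z w' * B w z')
        - (B x z' * B y w' + B x w' * B y z') * (B z x' * B w y' + B z y' * B w x'))) := by
  simp only [pairing, polar, LinearMap.compl₁₂_apply, LinearMap.lTensor_tmul, LinearMap.comp_apply,
    altPolar_wdg, map_sub, TensorProduct.map_tmul, sqPolar_sqm, tmul_sub, tmul_add, add_tmul,
    map_add, LinearMap.sub_apply, LinearMap.add_apply, BilinForm.tensorDistrib_tmul]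
  ring

theorem RAmbient.pairing_koszulGen_self (B : BilinForm ℚ V) (p q x y z a b c : V) :
    pairing B (koszulGen p q ![x, y, z]) (koszulGen a a ![a, b, c]) =
      160 * (B p a * B q a *
        !![B x a, B x b, B x c; B y a, B y b, B y c; B z a, B z b, B z c].det) := by
  simp only [koszulGen_self, koszulGen_apply p, map_add, map_smul, LinearMap.add_apply,
    smul_eq_mul, pairing_tmul, Matrix.det_fin_three]
  simp
  ring

theorem eq_zero_of_pairing_toDual_self_eq_zero {ι : Type*} [DecidableEq ι]
    (b : Module.Basis ι ℚ V) {t : RAmbient V} (ht : RAmbient.pairing b.toDual t t = 0) : t = 0 := by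
  refine RAmbient.polar_injective (Eq.trans ?_ (map_zero _).symm)
  refine eq_zero_of_toDual_self_eq_zero
    (b.tensorProduct ((b.tensorProduct b).tensorProduct (b.tensorProduct b))) ?_
  simp only [toDual_tensorProduct]
  exact ht

end Pairing

section Degeneration

open LinearMap (BilinForm)

variable {V}

theorem map_add_algebraMap_mem_polynomialCurves (f : Module.End ℚ V) (x : RAmbient V) :
    (fun t : ℚ => RAmbient.map (f + algebraMap ℚ (Module.End ℚ V) t) x) ∈
      polynomialCurves ℚ (RAmbient V) := by
  let curve : RAmbient V →ₗ[ℚ] ℚ → RAmbient V :=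
    LinearMap.pi fun t => RAmbient.map (f + algebraMap ℚ (Module.End ℚ V) t)
  suffices h : (polynomialCurves ℚ (RAmbient V)).mkQ ∘ₗ curve = 0 from
    (Submodule.Quotient.mk_eq_zero _).1 (LinearMap.congr_fun h x)
  refine rAmbient_hom_ext fun q x y z w => (Submodule.Quotient.mk_eq_zero _).2 ?_
  have line (v : V) :
      (fun t : ℚ => (f + algebraMap ℚ (Module.End ℚ V) t) v) ∈ polynomialCurves ℚ V :=
    add_smul_mem_polynomialCurves (f v) v
  have prod (v w : V) := bilinear_mem_polynomialCurves (sqm V) (line v) (line w)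
  have key := bilinear_mem_polynomialCurves (mk ℚ V (AltM (SqM V))) (line q)
    (bilinear_mem_polynomialCurves (wdg (SqM V)) (prod x y) (prod z w))
  convert key using 2
  exact RAmbient.map_tmul _ q x y z w

theorem le_comap_map_of_forall_equiv {U : Submodule ℚ (RAmbient V)}
    (hU : ∀ g : V ≃ₗ[ℚ] V, U ≤ U.comap (RAmbient.map g.toLinearMap)) (f : Module.End ℚ V)
    [FiniteDimensional ℚ (LinearMap.range f)] : U ≤ U.comap (RAmbient.map f) := by
  intro x hx
  have hinf : {t : ℚ | RAmbient.map (f + algebraMap ℚ (Module.End ℚ V) t) x ∈ U}.Infinite := by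
    refine (finite_setOf_not_isUnit_add_algebraMap f).infinite_compl.mono fun t ht => ?_
    obtain ⟨g, hg⟩ := not_not.1 ht
    rw [Set.mem_ofPred_eq, ← hg]
    exact hU (LinearMap.GeneralLinearGroup.toLinearEquiv g) hx
  simpa using mem_of_infinite_setOf_mem (map_add_algebraMap_mem_polynomialCurves f x) hinf 0

/-- The endomorphism `v ↦ B(v, a) e₁ + t (B(v, b) e₂ + B(v, c) e₃)`. Its lowest order term in `t`
on `koszulSpan V` extracts a multiple of the highest weight vector attached to `e₁, e₂, e₃`. -/
def degeneration (B : BilinForm ℚ V) (a b c e₁ e₂ e₃ : V) (t : ℚ) : Module.End ℚ V :=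
  Fintype.linearCombination ℚ ![e₁, e₂, e₃] ∘ₗ
    LinearMap.pi ![B.flip a, t • B.flip b, t • B.flip c]

instance (B : BilinForm ℚ V) (a b c e₁ e₂ e₃ : V) (t : ℚ) :
    FiniteDimensional ℚ (LinearMap.range (degeneration B a b c e₁ e₂ e₃ t)) :=
  Submodule.finiteDimensional_of_le (LinearMap.range_comp_le_range _ _)

theorem degeneration_apply (B : BilinForm ℚ V) (a b c e₁ e₂ e₃ : V) (t : ℚ) (x : V) :
    degeneration B a b c e₁ e₂ e₃ t x = B x a • e₁ + t • (B x b • e₂ + B x c • e₃) := by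
  simp [degeneration, Fintype.linearCombination_apply, Fin.sum_univ_three, smul_smul, add_assoc]

theorem koszulGen_degeneration (B : BilinForm ℚ V) (a b c e₁ e₂ e₃ p q x y z : V) (t : ℚ) :
    letI f := degeneration B a b c e₁ e₂ e₃ t
    koszulGen p q ![f x, f y, f z] =
      (t ^ 2 * !![B x a, B x b, B x c; B y a, B y b, B y c; B z a, B z b, B z c].det) •
        koszulGen p q ![e₁, e₂, e₃] := by
  have h := alternatingMap_map_sum_smul (koszulGen p q)
    !![B x a, t * B x b, t * B x c; B y a, t * B y b, t * B y c; B z a, t * B z b, t * B z c]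
    ![e₁, e₂, e₃]
  convert h using 2
  · ext i
    fin_cases i <;> simp [degeneration_apply, Fin.sum_univ_three, smul_smul, add_assoc]
  · simp [Matrix.det_fin_three]
    ring

-- On `koszulSpan V`, `t⁻² • map (f t)` is quadratic in `t` with constant term `160⁻¹` times the
-- right-hand side; the coefficients are `160` times those of Lagrange extrapolation from
-- `t = 1, 2, 3` to `t = 0`.
theorem map_degeneration_extrapolation (B : BilinForm ℚ V) (a b c e₁ e₂ e₃ : V) {x : RAmbient V}
    (hx : x ∈ koszulSpan V) :
    letI f := degeneration B a b c e₁ e₂ e₃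
    (480 : ℚ) • RAmbient.map (f 1) x - (120 : ℚ) • RAmbient.map (f 2) x
        + (160 / 9 : ℚ) • RAmbient.map (f 3) x =
      RAmbient.pairing B x (koszulGen a a ![a, b, c]) • koszulGen e₁ e₁ ![e₁, e₂, e₃] := by
  induction hx using Submodule.span_induction with
  | mem x hx =>
    obtain ⟨p, q, x, y, z, rfl⟩ := hx
    simp only [RAmbient.map_koszulGen, koszulGen_degeneration, RAmbient.pairing_koszulGen_self]
    simp only [koszulGen_apply, degeneration_apply, map_add, map_smul, LinearMap.add_apply,
      LinearMap.smul_apply, tmul_add, tmul_smul]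
    module
  | zero => simp
  | add x y _ _ hx hy =>
    simp only [map_add, LinearMap.add_apply, add_smul, ← hx, ← hy]
    module
  | smul r x _ hx =>
    simp only [map_smul, LinearMap.smul_apply, smul_assoc, ← hx]
    module

theorem koszulSpan_le_of_pairing_ne_zero {U : Submodule ℚ (RAmbient V)} (hUK : U ≤ koszulSpan V)
    (hU : ∀ g : V ≃ₗ[ℚ] V, U ≤ U.comap (RAmbient.map g.toLinearMap)) {B : BilinForm ℚ V}
    {x : RAmbient V} (hx : x ∈ U) {a b c : V}
    (h : RAmbient.pairing B x (koszulGen a a ![a, b, c]) ≠ 0) : koszulSpan V ≤ U :=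
  koszulSpan_le fun e₁ e₂ e₃ => by
    have stable (t : ℚ) : RAmbient.map (degeneration B a b c e₁ e₂ e₃ t) x ∈ U :=
      le_comap_map_of_forall_equiv hU _ hx
    rw [← U.smul_mem_iff h, ← map_degeneration_extrapolation B a b c e₁ e₂ e₃ (hUK hx)]
    exact add_mem (sub_mem (U.smul_mem _ (stable 1)) (U.smul_mem _ (stable 2)))
      (U.smul_mem _ (stable 3))

end Degeneration

section Irreducibility

variable {V}

theorem koszulSpan_ne_bot (hV : 3 ≤ Module.rank ℚ V) : koszulSpan V ≠ ⊥ := by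
  classical
  let b := Module.Basis.ofVectorSpace ℚ V
  obtain ⟨i⟩ : Nonempty (Fin 3 ↪ Module.Basis.ofVectorSpaceIndex ℚ V) := by
    rw [← Cardinal.le_def, b.mk_eq_rank'']
    simpa using hV
  refine Submodule.ne_bot_iff _ |>.2
    ⟨_, koszulGen_mem_koszulSpan (b (i 0)) (b (i 0)) (b (i 0)) (b (i 1)) (b (i 2)), fun h => ?_⟩
  have hpair := RAmbient.pairing_koszulGen_self b.toDual
    (b (i 0)) (b (i 0)) (b (i 0)) (b (i 1)) (b (i 2)) (b (i 0)) (b (i 1)) (b (i 2))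
  simp [h, Matrix.det_fin_three, Module.Basis.toDual_apply] at hpair

theorem eq_bot_or_eq_koszulSpan {U : Submodule ℚ (RAmbient V)} (hUK : U ≤ koszulSpan V)
    (hU : ∀ g : V ≃ₗ[ℚ] V, U ≤ U.comap (RAmbient.map g.toLinearMap)) :
    U = ⊥ ∨ U = koszulSpan V := by
  classical
  let b := Module.Basis.ofVectorSpace ℚ V
  by_cases horth : ∀ x ∈ U, ∀ a c d, RAmbient.pairing b.toDual x (koszulGen a a ![a, c, d]) = 0
  · refine .inl ((Submodule.eq_bot_iff U).2 fun x hx => ?_)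
    have hker : koszulSpan V ≤ LinearMap.ker (RAmbient.pairing b.toDual x) :=
      koszulSpan_le (horth x hx)
    exact eq_zero_of_pairing_toDual_self_eq_zero b (hker (hUK hx))
  · push Not at horth
    obtain ⟨x, hx, a, c, d, hpair⟩ := horth
    exact .inr (hUK.antisymm (koszulSpan_le_of_pairing_ne_zero hUK hU hx hpair))

end Irreducibility

theorem R_irreducible_general (hdim : 3 ≤ Module.rank ℚ V)
    (m : (V ⊗[ℚ] AltM (SqM V)) →ₗ[ℚ] (CubM V ⊗[ℚ] SqM V))
    (hm : ∀ (q : V) (u v : SqM V),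
      m (q ⊗ₜ[ℚ] wdg (SqM V) u v) = mulC V q u ⊗ₜ[ℚ] v - mulC V q v ⊗ₜ[ℚ] u) :
    (∀ (g : V ≃ₗ[ℚ] V) (T : (V ⊗[ℚ] AltM (SqM V)) →ₗ[ℚ] (V ⊗[ℚ] AltM (SqM V))),
      (∀ q x y z w : V,
        T (q ⊗ₜ[ℚ] wdg (SqM V) (sqm V x y) (sqm V z w))
          = g q ⊗ₜ[ℚ] wdg (SqM V) (sqm V (g x) (g y)) (sqm V (g z) (g w))) →
      (LinearMap.ker m).map T ≤ LinearMap.ker m) ∧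
    LinearMap.ker m ≠ ⊥ ∧
    (∀ U : Submodule ℚ (V ⊗[ℚ] AltM (SqM V)), U ≤ LinearMap.ker m →
      (∀ (g : V ≃ₗ[ℚ] V) (T : (V ⊗[ℚ] AltM (SqM V)) →ₗ[ℚ] (V ⊗[ℚ] AltM (SqM V))),
        (∀ q x y z w : V,
          T (q ⊗ₜ[ℚ] wdg (SqM V) (sqm V x y) (sqm V z w))
            = g q ⊗ₜ[ℚ] wdg (SqM V) (sqm V (g x) (g y)) (sqm V (g z) (g w))) →
        U.map T ≤ U) →
      U = ⊥ ∨ U = LinearMap.ker m) := by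
  rw [ker_eq_koszulSpan hm]
  refine ⟨fun g T hT => ?_, koszulSpan_ne_bot hdim, fun U hUK hU => ?_⟩
  · have hT_eq : T = RAmbient.map g.toLinearMap :=
      rAmbient_hom_ext fun q x y z w => by simp [hT]
    exact hT_eq ▸ RAmbient.map_koszulSpan_le g.toLinearMap
  · refine eq_bot_or_eq_koszulSpan hUK fun g => ?_
    exact Submodule.map_le_iff_le_comap.1 <| hU g _ (RAmbient.map_tmul g.toLinearMap)

/-- **Lemma 2.1(ii).** For `dim V ≥ 3`, the subspace `R(V) = ker m ⊆ V ⊗ Λ²(P²V)` is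
invariant under the `GL(V)`-action given by functoriality, it is nonzero, and it is an
irreducible `GL(V)`-representation: its only invariant subspaces are `0` and `R(V)`. -/
theorem R_irreducible [FiniteDimensional ℚ V] (hdim : 3 ≤ Module.finrank ℚ V)
    (m : (V ⊗[ℚ] AltM (SqM V)) →ₗ[ℚ] (CubM V ⊗[ℚ] SqM V))
    (hm : ∀ (q : V) (u v : SqM V),
      m (q ⊗ₜ[ℚ] wdg (SqM V) u v) = mulC V q u ⊗ₜ[ℚ] v - mulC V q v ⊗ₜ[ℚ] u) :
    (∀ (g : V ≃ₗ[ℚ] V) (T : (V ⊗[ℚ] AltM (SqM V)) →ₗ[ℚ] (V ⊗[ℚ] AltM (SqM V))),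
      (∀ q x y z w : V,
        T (q ⊗ₜ[ℚ] wdg (SqM V) (sqm V x y) (sqm V z w))
          = g q ⊗ₜ[ℚ] wdg (SqM V) (sqm V (g x) (g y)) (sqm V (g z) (g w))) →
      (LinearMap.ker m).map T ≤ LinearMap.ker m) ∧
    LinearMap.ker m ≠ ⊥ ∧
    (∀ U : Submodule ℚ (V ⊗[ℚ] AltM (SqM V)), U ≤ LinearMap.ker m →
      (∀ (g : V ≃ₗ[ℚ] V) (T : (V ⊗[ℚ] AltM (SqM V)) →ₗ[ℚ] (V ⊗[ℚ] AltM (SqM V))),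
        (∀ q x y z w : V,
          T (q ⊗ₜ[ℚ] wdg (SqM V) (sqm V x y) (sqm V z w))
            = g q ⊗ₜ[ℚ] wdg (SqM V) (sqm V (g x) (g y)) (sqm V (g z) (g w))) →
        U.map T ≤ U) →
      U = ⊥ ∨ U = LinearMap.ker m) :=
  R_irreducible_general V (by rw [← Module.finrank_eq_rank]; exact_mod_cast hdim) m hm

end
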